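/- arXiv:1008.3170 — 3 statements merged into one kernel-verified Lean document; each statement's English description precedes it below -/
import Mathlib

section
/- Let L : ℝ^m × ℝ^N × (ℝ^N)^m → ℝ be a smooth first-order Lagrangian, η : ℝ^m → ℝ^m a smooth diffeomorphism, and φ : ℝ^m → ℝ^N smooth. Define the covariantized Lagrangian L̃(x,b,J,y,v) := L(b, y, v·J⁻¹)·det J for b ∈ ℝ^m, J an invertible m×m matrix, y ∈ ℝ^N, v ∈ (ℝ^N)^m, where (v·J⁻¹)^A_c = Σ_μ v^A_μ (J⁻¹)^μ_c, evaluated along the section s(x) = (x, η(x), Dη(x), φ(x), Dφ(x)). Then the Euler–Lagrange equations of L̃ with respect to φ, namely (∂L̃/∂y^A)(s(x)) − Σ_μ (d/dx^μ)[(∂L̃/∂v^A_μ)(s(x))] = 0 for all A and all x ∈ ℝ^m, hold if and only if ψ := φ∘η⁻¹ satisfies the Euler–Lagrange equations of L, namely (∂L/∂y^A)(j¹ψ(b)) − Σ_c (d/db^c)[(∂L/∂v^A_c)(j¹ψ(b))] = 0 for all A and all b ∈ ℝ^m, where j¹ψ(b) = (b, ψ(b), Dψ(b)). -/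
noncomputable section

/-- Jacobian matrix of `η : ℝ^m → ℝ^m`: `(jacobian η x) a μ = ∂η^a/∂x^μ (x)`. -/
def jacobian {m : ℕ} (η : (Fin m → ℝ) → (Fin m → ℝ)) (x : Fin m → ℝ) :
    Fin m → Fin m → ℝ :=
  fun a μ => fderiv ℝ η x (Pi.single μ 1) a

/-- First-jet multivelocities of a field `φ : ℝ^m → ℝ^N`: `(jet1 φ x) A μ = ∂φ^A/∂x^μ (x)`. -/
def jet1 {m N : ℕ} (φ : (Fin m → ℝ) → (Fin N → ℝ)) (x : Fin m → ℝ) :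
    Fin N → Fin m → ℝ :=
  fun A μ => fderiv ℝ φ x (Pi.single μ 1) A

/-- The covariantized Lagrangian `L̃(x,b,J,y,v) = L(b, y, v·J⁻¹) · det J`. -/
def Ltilde {m N : ℕ}
    (L : (Fin m → ℝ) × (Fin N → ℝ) × (Fin N → Fin m → ℝ) → ℝ) :
    (Fin m → ℝ) × (Fin m → ℝ) × (Fin m → Fin m → ℝ) × (Fin N → ℝ) ×
      (Fin N → Fin m → ℝ) → ℝ :=
  fun p =>
    L (p.2.1, p.2.2.2.1, fun A c => ∑ μ : Fin m, p.2.2.2.2 A μ * (Matrix.of p.2.2.1)⁻¹ μ c)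
      * (Matrix.of p.2.2.1).det

/-- The section `s(x) = (x, η(x), Dη(x), φ(x), Dφ(x))`. -/
def covSect {m N : ℕ} (η : (Fin m → ℝ) → (Fin m → ℝ))
    (φ : (Fin m → ℝ) → (Fin N → ℝ)) (x : Fin m → ℝ) :
    (Fin m → ℝ) × (Fin m → ℝ) × (Fin m → Fin m → ℝ) × (Fin N → ℝ) ×
      (Fin N → Fin m → ℝ) :=
  (x, η x, jacobian η x, φ x, jet1 φ x)

section MatrixCalculus

variable {n : Type*} [Fintype n]

/-- If `H` is symmetric in its outer indices, the terms of the divergence of `det J • J⁻¹`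
cancel. -/
theorem sum_inv_mul_sub_inv_mul_eq_zero (K : Matrix n n ℝ) (H : n → n → n → ℝ)
    (hH : ∀ μ a ν, H μ a ν = H ν a μ) (c : n) :
    ∑ μ, ((∑ a, ∑ ν, H μ a ν * K ν a) * K μ c - ∑ a, ∑ ν, K μ a * H μ a ν * K ν c) = 0 := by
  rw [Finset.sum_sub_distrib, sub_eq_zero]
  simp only [Finset.sum_mul]
  rw [Finset.sum_comm, Finset.sum_comm (s := Finset.univ) (t := Finset.univ)
    (f := fun μ a => ∑ ν, K μ a * H μ a ν * K ν c)]
  refine Finset.sum_congr rfl fun a _ => ?_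
  rw [Finset.sum_comm]
  refine Finset.sum_congr rfl fun ν _ => Finset.sum_congr rfl fun μ _ => ?_
  rw [hH ν a μ]
  ring

variable [DecidableEq n]

/-- The determinant as a continuous multilinear function of the rows. -/
def detContinuousMultilinear (n : Type*) [Fintype n] [DecidableEq n] :
    ContinuousMultilinearMap ℝ (fun _ : n => n → ℝ) ℝ where
  toMultilinearMap := (Matrix.detRowAlternating (R := ℝ) (n := n)).toMultilinearMap
  cont := Continuous.matrix_det (A := fun M : n → n → ℝ => Matrix.of M) continuous_id

theorem Matrix.det_updateRow_eq_sum_mul_adjugate (M : Matrix n n ℝ) (i : n) (w : n → ℝ) :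
    (M.updateRow i w).det = ∑ j, w j * M.adjugate j i := by
  rw [← Matrix.cramer_transpose_apply, Matrix.cramer_eq_adjugate_mulVec,
    ← Matrix.adjugate_transpose]
  simp [Matrix.mulVec, dotProduct, mul_comm]

/-- Derivative of the determinant; `linearDeriv_det_apply` gives the Jacobi formula. -/
theorem hasFDerivAt_det (M : n → n → ℝ) :
    HasFDerivAt (fun M : n → n → ℝ => (Matrix.of M).det)
      ((detContinuousMultilinear n).linearDeriv M) M :=
  (detContinuousMultilinear n).hasFDerivAt M

theorem linearDeriv_det_apply (M H : n → n → ℝ) :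
    (detContinuousMultilinear n).linearDeriv M H
      = ∑ i, ∑ j, H i j * (Matrix.of M).adjugate j i := by
  rw [ContinuousMultilinearMap.linearDeriv_apply]
  exact Finset.sum_congr rfl fun i _ =>
    Matrix.det_updateRow_eq_sum_mul_adjugate (Matrix.of M) i (H i)

theorem differentiable_adjugate_apply (i j : n) :
    Differentiable ℝ (fun M : n → n → ℝ => (Matrix.of M).adjugate i j) := by
  have hrow : Differentiable ℝ
      (fun M : n → n → ℝ => Function.update M j (Pi.single i (1 : ℝ))) := by
    refine differentiable_pi.2 fun k => ?_
    by_cases hk : k = j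
    · subst hk
      simp
    · simp only [Function.update_of_ne hk]
      fun_prop
  have hdet : Differentiable ℝ (fun M : n → n → ℝ => (Matrix.of M).det) :=
    fun M => (hasFDerivAt_det M).differentiableAt
  simp only [Matrix.adjugate_apply]
  exact hdet.comp hrow

theorem differentiableAt_inv_apply {M : n → n → ℝ} (hM : (Matrix.of M).det ≠ 0) (i j : n) :
    DifferentiableAt ℝ (fun M : n → n → ℝ => (Matrix.of M)⁻¹ i j) M := by
  simp only [Matrix.inv_def, Ring.inverse_eq_inv', Matrix.smul_apply, smul_eq_mul]
  exact ((hasFDerivAt_det M).differentiableAt.inv hM).mul (differentiable_adjugate_apply i j M)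

end MatrixCalculus

section Jacobian

variable {m N : ℕ}

theorem jacobian_mulVec (η : (Fin m → ℝ) → (Fin m → ℝ)) (x v : Fin m → ℝ) :
    fderiv ℝ η x v = (Matrix.of (jacobian η x)).mulVec v := by
  ext a
  conv_lhs => rw [pi_eq_sum_univ' v]
  simp [jacobian, Matrix.mulVec, dotProduct, mul_comm]

theorem jacobian_mul_jacobian {η η' : (Fin m → ℝ) → (Fin m → ℝ)}
    (hη : Differentiable ℝ η) (hη' : Differentiable ℝ η')
    (hinv : Function.LeftInverse η' η) (x : Fin m → ℝ) :
    Matrix.of (jacobian η' (η x)) * Matrix.of (jacobian η x) = 1 := by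
  have hcomp : (fderiv ℝ η' (η x)).comp (fderiv ℝ η x) = ContinuousLinearMap.id ℝ _ := by
    rw [← fderiv_comp x (hη' _) (hη x), hinv.comp_eq_id, fderiv_id]
  ext a μ
  have h := congrFun (DFunLike.congr_fun hcomp (Pi.single μ 1)) a
  rw [ContinuousLinearMap.comp_apply, jacobian_mulVec, jacobian_mulVec, Matrix.mulVec_mulVec] at h
  simpa [Matrix.one_apply, Pi.single_apply] using h

theorem differentiable_jet1 {ψ : (Fin m → ℝ) → (Fin N → ℝ)} (hψ : ContDiff ℝ 2 ψ) :
    Differentiable ℝ (jet1 ψ) := by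
  have h : Differentiable ℝ (fderiv ℝ ψ) :=
    (hψ.fderiv_right (m := 1) (by norm_num)).differentiable (by norm_num)
  refine differentiable_pi.2 fun a => differentiable_pi.2 fun μ => ?_
  unfold jet1
  fun_prop

theorem differentiable_jacobian {η : (Fin m → ℝ) → (Fin m → ℝ)} (hη : ContDiff ℝ 2 η) :
    Differentiable ℝ (jacobian η) :=
  differentiable_jet1 hη

theorem fderiv_jacobian_symm {η : (Fin m → ℝ) → (Fin m → ℝ)} (hη : ContDiff ℝ 2 η)
    (x : Fin m → ℝ) (μ a ν : Fin m) :
    fderiv ℝ (jacobian η) x (Pi.single μ 1) a ν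
      = fderiv ℝ (jacobian η) x (Pi.single ν 1) a μ := by
  have hd : Differentiable ℝ (fderiv ℝ η) :=
    (hη.fderiv_right (m := 1) (by norm_num)).differentiable (by norm_num)
  have key : ∀ μ ν : Fin m, fderiv ℝ (jacobian η) x (Pi.single μ 1) a ν
      = fderiv ℝ (fderiv ℝ η) x (Pi.single μ 1) (Pi.single ν 1) a := by
    intro μ ν
    have h1 := hasFDerivAt_pi'.1 (hasFDerivAt_pi'.1
      (differentiable_jacobian hη x).hasFDerivAt a) ν
    have h2 := hasFDerivAt_pi'.1
      ((hd x).hasFDerivAt.clm_apply (hasFDerivAt_const (Pi.single ν (1 : ℝ)) x)) a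
    have h := DFunLike.congr_fun (h1.unique h2) (Pi.single μ 1)
    simpa using h
  rw [key, key]
  have hs : IsSymmSndFDerivAt ℝ η x :=
    hη.contDiffAt.isSymmSndFDerivAt (by simp)
  rw [hs.eq]

/-- The Piola identity: the columns of `det (Dη) • (Dη)⁻¹` are divergence free. -/
theorem piola_identity {η : (Fin m → ℝ) → (Fin m → ℝ)} (hη : ContDiff ℝ 2 η)
    (hdet : ∀ x, (Matrix.of (jacobian η x)).det ≠ 0) (x : Fin m → ℝ) (c : Fin m) :
    ∑ μ, fderiv ℝ (fun x => (Matrix.of (jacobian η x)).det * (Matrix.of (jacobian η x))⁻¹ μ c) x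
      (Pi.single μ 1) = 0 := by
  set H : Fin m → Fin m → Fin m → ℝ :=
    fun ρ a ν => fderiv ℝ (jacobian η) x (Pi.single ρ 1) a ν with hH
  set J := Matrix.of (jacobian η x) with hJ
  have hJd := differentiable_jacobian hη x
  have hJK : J * J⁻¹ = 1 := Matrix.mul_nonsing_inv _ (hdet x).isUnit
  have hdetd : HasFDerivAt (fun x => (Matrix.of (jacobian η x)).det) _ x :=
    (hasFDerivAt_det (jacobian η x)).comp x hJd.hasFDerivAt
  have hKd : ∀ μ a, DifferentiableAt ℝ (fun x => (Matrix.of (jacobian η x))⁻¹ μ a) x :=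
    fun μ a => (differentiableAt_inv_apply (hdet x) μ a).comp x hJd
  have hadj : ∀ i j, J.adjugate i j = J.det * J⁻¹ i j := by
    intro i j
    rw [Matrix.inv_def, Ring.inverse_eq_inv', Matrix.smul_apply, smul_eq_mul,
      mul_inv_cancel_left₀ (hdet x)]
  have hJentry : ∀ a ν, HasFDerivAt (fun x => jacobian η x a ν) _ x := fun a ν =>
    hasFDerivAt_pi'.1 (hasFDerivAt_pi'.1 hJd.hasFDerivAt a) ν
  have hdK : ∀ ρ μ c, fderiv ℝ (fun x => (Matrix.of (jacobian η x))⁻¹ μ c) x (Pi.single ρ 1)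
      = - ∑ a, ∑ ν, J⁻¹ μ a * H ρ a ν * J⁻¹ ν c := by
    intro ρ μ c
    set dK : Matrix (Fin m) (Fin m) ℝ := Matrix.of fun μ a =>
      fderiv ℝ (fun x => (Matrix.of (jacobian η x))⁻¹ μ a) x (Pi.single ρ 1) with hdKdef
    have hrel : dK * J = - (J⁻¹ * Matrix.of (H ρ)) := by
      ext i ν
      have hconst : (fun x => ∑ a, (Matrix.of (jacobian η x))⁻¹ i a * jacobian η x a ν)
          = fun _ => (1 : Matrix (Fin m) (Fin m) ℝ) i ν := by
        funext x'
        rw [← Matrix.nonsing_inv_mul _ (hdet x').isUnit]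
        simp [Matrix.mul_apply]
      have h1 := HasFDerivAt.fun_sum (u := Finset.univ) fun a _ =>
        (hKd i a).hasFDerivAt.fun_mul (hJentry a ν)
      rw [hconst] at h1
      have h := DFunLike.congr_fun (h1.unique (hasFDerivAt_const _ x)) (Pi.single ρ 1)
      simp [Finset.sum_add_distrib] at h
      simp only [Matrix.mul_apply, Matrix.neg_apply, hdKdef, Matrix.of_apply, hJ, hH]
      rw [eq_neg_iff_add_eq_zero, ← h, add_comm]
      congr 1
      exact Finset.sum_congr rfl fun _ _ => mul_comm _ _
    have hdKeq : dK = - (J⁻¹ * Matrix.of (H ρ) * J⁻¹) := by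
      rw [← Matrix.neg_mul, ← hrel, Matrix.mul_assoc, hJK, Matrix.mul_one]
    have h := congrFun (congrFun hdKeq μ) c
    rw [Matrix.mul_assoc] at h
    simpa [hdKdef, Matrix.mul_apply, Finset.mul_sum, mul_assoc] using h
  have hterm : ∀ μ, fderiv ℝ
      (fun x => (Matrix.of (jacobian η x)).det * (Matrix.of (jacobian η x))⁻¹ μ c) x
      (Pi.single μ 1) = J.det * ((∑ a, ∑ ν, H μ a ν * J⁻¹ ν a) * J⁻¹ μ c
        - ∑ a, ∑ ν, J⁻¹ μ a * H μ a ν * J⁻¹ ν c) := by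
    intro μ
    have h := (hdetd.fun_mul (hKd μ c).hasFDerivAt).fderiv
    rw [h, add_apply, smul_apply, smul_apply, hdK, ContinuousLinearMap.comp_apply,
      linearDeriv_det_apply]
    have hs : ∑ i, ∑ j, fderiv ℝ (jacobian η) x (Pi.single μ 1) i j * J.adjugate j i
        = J.det * ∑ a, ∑ ν, H μ a ν * J⁻¹ ν a := by
      simp only [hadj, Finset.mul_sum, hH]
      exact Finset.sum_congr rfl fun _ _ => Finset.sum_congr rfl fun _ _ => by ring
    rw [← hJ, hs]
    simp only [smul_eq_mul]
    ring
  rw [Finset.sum_congr rfl fun μ _ => hterm μ, ← Finset.mul_sum,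
    sum_inv_mul_sub_inv_mul_eq_zero J⁻¹ H (fderiv_jacobian_symm hη x) c, mul_zero]

theorem jet1_comp {φ : (Fin m → ℝ) → (Fin N → ℝ)} {η' : (Fin m → ℝ) → (Fin m → ℝ)}
    {b : Fin m → ℝ} (hφ : DifferentiableAt ℝ φ (η' b)) (hη' : DifferentiableAt ℝ η' b) :
    jet1 (φ ∘ η') b = fun A c => ∑ μ, jet1 φ (η' b) A μ * jacobian η' b μ c := by
  funext A c
  unfold jet1
  rw [fderiv_comp b hφ hη', ContinuousLinearMap.comp_apply,
    pi_eq_sum_univ' (fderiv ℝ η' b (Pi.single c 1))]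
  simp [jacobian, mul_comm]

/-- Derivative of the covariantized Lagrangian in the field and multivelocity directions. -/
theorem fderiv_Ltilde_vertical
    {L : (Fin m → ℝ) × (Fin N → ℝ) × (Fin N → Fin m → ℝ) → ℝ} (hL : Differentiable ℝ L)
    (x b : Fin m → ℝ) {J : Fin m → Fin m → ℝ} (hJ : (Matrix.of J).det ≠ 0)
    (y w : Fin N → ℝ) (v u : Fin N → Fin m → ℝ) :
    fderiv ℝ (Ltilde L) (x, b, J, y, v) (0, 0, 0, w, u)
      = fderiv ℝ L (b, y, fun A c => ∑ μ, v A μ * (Matrix.of J)⁻¹ μ c)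
          (0, w, fun A c => ∑ μ, u A μ * (Matrix.of J)⁻¹ μ c) * (Matrix.of J).det := by
  have hd : DifferentiableAt ℝ (Ltilde L) (x, b, J, y, v) := by
    unfold Ltilde
    have hdet : DifferentiableAt ℝ (fun p : (Fin m → ℝ) × (Fin m → ℝ) × (Fin m → Fin m → ℝ) ×
        (Fin N → ℝ) × (Fin N → Fin m → ℝ) => (Matrix.of p.2.2.1).det) (x, b, J, y, v) :=
      DifferentiableAt.comp (g := fun M : Fin m → Fin m → ℝ => (Matrix.of M).det)
        (x, b, J, y, v) (hasFDerivAt_det J).differentiableAt (by fun_prop)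
    have hinv : ∀ μ c, DifferentiableAt ℝ (fun p : (Fin m → ℝ) × (Fin m → ℝ) ×
        (Fin m → Fin m → ℝ) × (Fin N → ℝ) × (Fin N → Fin m → ℝ) =>
        (Matrix.of p.2.2.1)⁻¹ μ c) (x, b, J, y, v) := fun μ c =>
      DifferentiableAt.comp (g := fun M : Fin m → Fin m → ℝ => (Matrix.of M)⁻¹ μ c)
        (x, b, J, y, v) (differentiableAt_inv_apply hJ μ c) (by fun_prop)
    refine DifferentiableAt.mul ((hL _).comp _ ?_) hdet
    refine DifferentiableAt.prodMk (by fun_prop) (DifferentiableAt.prodMk (by fun_prop) ?_)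
    exact differentiableAt_pi.2 fun A => differentiableAt_pi.2 fun c =>
      DifferentiableAt.fun_sum fun μ _ => DifferentiableAt.mul (by fun_prop) (hinv μ c)
  have hline : HasDerivAt (fun t : ℝ => (x, b, J, y + t • w, v + t • u))
      ((0, 0, 0, w, u) : (Fin m → ℝ) × (Fin m → ℝ) × (Fin m → Fin m → ℝ) ×
        (Fin N → ℝ) × (Fin N → Fin m → ℝ)) 0 :=
    (hasDerivAt_const _ _).prodMk <| (hasDerivAt_const _ _).prodMk <|
      (hasDerivAt_const _ _).prodMk <|
      HasDerivAt.prodMk (by simpa using ((hasDerivAt_id (0 : ℝ)).smul_const w).const_add y)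
        (by simpa using ((hasDerivAt_id (0 : ℝ)).smul_const u).const_add v)
  set T : (Fin N → Fin m → ℝ) → Fin N → Fin m → ℝ :=
    fun v A c => ∑ μ, v A μ * (Matrix.of J)⁻¹ μ c with hT
  have hTlin : ∀ t : ℝ, T (v + t • u) = T v + t • T u := by
    intro t
    funext A c
    simp [hT, add_mul, Finset.sum_add_distrib, Finset.mul_sum, mul_assoc]
  have hline' : HasDerivAt (fun t : ℝ => (b, y + t • w, T (v + t • u)))
      ((0, w, T u) : (Fin m → ℝ) × (Fin N → ℝ) × (Fin N → Fin m → ℝ)) 0 := by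
    simp only [hTlin]
    exact (hasDerivAt_const _ _).prodMk <|
      HasDerivAt.prodMk (by simpa using ((hasDerivAt_id (0 : ℝ)).smul_const w).const_add y)
        (by simpa using ((hasDerivAt_id (0 : ℝ)).smul_const (T u)).const_add (T v))
  have h1 := HasFDerivAt.comp_hasDerivAt_of_eq (0 : ℝ) hd.hasFDerivAt hline (by simp)
  have h2 := (HasFDerivAt.comp_hasDerivAt_of_eq (0 : ℝ) (hL (b, y, T v)).hasFDerivAt hline'
    (by simp)).mul_const (Matrix.of J).det
  exact h1.unique h2

/-- Equivariance of the Euler–Lagrange expression: that of `Ltilde L` at `φ` is that of `L` at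
`φ ∘ η⁻¹`, pulled back by `η` as a density. -/
theorem eulerLagrange_Ltilde
    {L : (Fin m → ℝ) × (Fin N → ℝ) × (Fin N → Fin m → ℝ) → ℝ} (hL : ContDiff ℝ 2 L)
    {η η' : (Fin m → ℝ) → (Fin m → ℝ)} (hη : ContDiff ℝ 2 η) (hη' : ContDiff ℝ 2 η')
    (hinv : Function.LeftInverse η' η)
    {φ : (Fin m → ℝ) → (Fin N → ℝ)} (hφ : ContDiff ℝ 2 φ) (A : Fin N) (x : Fin m → ℝ) :
    fderiv ℝ (Ltilde L) (covSect η φ x) (0, 0, 0, Pi.single A 1, 0)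
        - ∑ μ : Fin m, fderiv ℝ (fun x' => fderiv ℝ (Ltilde L) (covSect η φ x')
            (0, 0, 0, 0, Pi.single A (Pi.single μ 1))) x (Pi.single μ 1)
      = (Matrix.of (jacobian η x)).det *
        (fderiv ℝ L (η x, (φ ∘ η') (η x), jet1 (φ ∘ η') (η x)) (0, Pi.single A 1, 0)
          - ∑ c : Fin m, fderiv ℝ (fun b' => fderiv ℝ L (b', (φ ∘ η') b', jet1 (φ ∘ η') b')
              (0, 0, Pi.single A (Pi.single c 1))) (η x) (Pi.single c 1)) := by
  have hηd : Differentiable ℝ η := hη.differentiable (by norm_num)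
  have hη'd : Differentiable ℝ η' := hη'.differentiable (by norm_num)
  have hφd : Differentiable ℝ φ := hφ.differentiable (by norm_num)
  have hLd : Differentiable ℝ L := hL.differentiable (by norm_num)
  have hψ : ContDiff ℝ 2 (φ ∘ η') := hφ.comp hη'
  have hmul := jacobian_mul_jacobian hηd hη'd hinv
  have hdet : ∀ x, (Matrix.of (jacobian η x)).det ≠ 0 := fun x h => by
    simpa [h] using congrArg Matrix.det (hmul x)
  have hjet : ∀ x, (fun A c => ∑ μ, jet1 φ x A μ * (Matrix.of (jacobian η x))⁻¹ μ c)
      = jet1 (φ ∘ η') (η x) := fun x => by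
    rw [jet1_comp (hφd _) (hη'd _), hinv x, Matrix.inv_eq_left_inv (hmul x)]
    rfl
  set P : Fin m → (Fin m → ℝ) → ℝ := fun c b =>
    fderiv ℝ L (b, (φ ∘ η') b, jet1 (φ ∘ η') b) (0, 0, Pi.single A (Pi.single c 1)) with hP
  have hPd : ∀ c, Differentiable ℝ (P c) := by
    intro c
    have hdL : Differentiable ℝ (fderiv ℝ L) :=
      (hL.fderiv_right (m := 1) (by norm_num)).differentiable (by norm_num)
    have hj : Differentiable ℝ fun b => (b, (φ ∘ η') b, jet1 (φ ∘ η') b) :=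
      differentiable_id.prodMk ((hφd.comp hη'd).prodMk (differentiable_jet1 hψ))
    exact (hdL.comp hj).clm_apply (differentiable_const _)
  have hy : fderiv ℝ (Ltilde L) (covSect η φ x) (0, 0, 0, Pi.single A 1, 0)
      = fderiv ℝ L (η x, (φ ∘ η') (η x), jet1 (φ ∘ η') (η x)) (0, Pi.single A 1, 0)
        * (Matrix.of (jacobian η x)).det := by
    rw [covSect, fderiv_Ltilde_vertical hLd _ _ (hdet x), hjet, Function.comp_apply, hinv x]
    congr 4
    funext B c
    simp
  have hv : ∀ μ x, fderiv ℝ (Ltilde L) (covSect η φ x) (0, 0, 0, 0, Pi.single A (Pi.single μ 1))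
      = ∑ c, (Matrix.of (jacobian η x)).det * (Matrix.of (jacobian η x))⁻¹ μ c * P c (η x) := by
    intro μ x
    have hvec : ((0, 0, fun B c => ∑ ν, (Pi.single A (Pi.single μ 1) : Fin N → Fin m → ℝ) B ν *
          (Matrix.of (jacobian η x))⁻¹ ν c) : (Fin m → ℝ) × (Fin N → ℝ) × (Fin N → Fin m → ℝ))
        = ∑ c, (Matrix.of (jacobian η x))⁻¹ μ c •
          ((0, 0, Pi.single A (Pi.single c 1)) :
            (Fin m → ℝ) × (Fin N → ℝ) × (Fin N → Fin m → ℝ)) := by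
      refine Prod.ext ?_ (Prod.ext ?_ ?_)
      · simp [Prod.fst_sum]
      · simp [Prod.fst_sum, Prod.snd_sum]
      · funext B c
        by_cases hB : B = A
        · subst hB
          simp [Prod.snd_sum, Finset.sum_apply, Pi.single_apply]
        · simp [Prod.snd_sum, Finset.sum_apply, Pi.single_eq_of_ne hB]
    rw [covSect, fderiv_Ltilde_vertical hLd _ _ (hdet x), hjet, hvec, map_sum, Finset.sum_mul]
    refine Finset.sum_congr rfl fun c _ => ?_
    rw [map_smul, smul_eq_mul, hP]
    simp only [Function.comp_apply, hinv x]
    ring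
  have hFd : ∀ μ c, DifferentiableAt ℝ
      (fun x => (Matrix.of (jacobian η x)).det * (Matrix.of (jacobian η x))⁻¹ μ c) x := by
    intro μ c
    have hJd := differentiable_jacobian hη x
    exact ((hasFDerivAt_det (jacobian η x)).differentiableAt.comp x hJd).mul
      ((differentiableAt_inv_apply (hdet x) μ c).comp x hJd)
  have hdiv : ∀ μ, fderiv ℝ (fun x' => fderiv ℝ (Ltilde L) (covSect η φ x')
        (0, 0, 0, 0, Pi.single A (Pi.single μ 1))) x (Pi.single μ 1)
      = ∑ c, ((Matrix.of (jacobian η x)).det * (Matrix.of (jacobian η x))⁻¹ μ c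
            * fderiv ℝ (P c) (η x) (fderiv ℝ η x (Pi.single μ 1))
          + P c (η x) * fderiv ℝ (fun x => (Matrix.of (jacobian η x)).det
            * (Matrix.of (jacobian η x))⁻¹ μ c) x (Pi.single μ 1)) := by
    intro μ
    simp only [hv]
    have h := HasFDerivAt.fun_sum (u := Finset.univ) fun c _ =>
      (hFd μ c).hasFDerivAt.fun_mul ((hPd c (η x)).hasFDerivAt.comp x (hηd x).hasFDerivAt)
    simp only [Function.comp_apply] at h
    rw [h.fderiv]
    simp
  have hsum : ∀ c, ∑ μ, (Matrix.of (jacobian η x))⁻¹ μ c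
        * fderiv ℝ (P c) (η x) (fderiv ℝ η x (Pi.single μ 1))
      = fderiv ℝ (P c) (η x) (Pi.single c 1) := by
    intro c
    simp only [← smul_eq_mul, ← map_smul, ← map_sum]
    congr 1
    rw [jacobian_mulVec]
    have hcol : ∑ μ, (Matrix.of (jacobian η x))⁻¹ μ c • (Pi.single μ 1 : Fin m → ℝ)
        = (Matrix.of (jacobian η x))⁻¹.mulVec (Pi.single c 1) := by
      ext a
      simp [Finset.sum_apply, Pi.single_apply]
    rw [hcol, Matrix.mulVec_mulVec, Matrix.mul_nonsing_inv _ (hdet x).isUnit, Matrix.one_mulVec]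
  rw [hy, mul_sub, mul_comm, Finset.sum_congr rfl fun μ _ => hdiv μ, Finset.sum_comm,
    Finset.mul_sum]
  congr 1
  refine Finset.sum_congr rfl fun c _ => ?_
  rw [Finset.sum_add_distrib, ← Finset.mul_sum, piola_identity hη hdet x c, mul_zero, add_zero,
    ← hsum c, Finset.mul_sum]
  exact Finset.sum_congr rfl fun μ _ => mul_assoc _ _ _

end Jacobian

/-- the Euler–Lagrange equations of `L̃` with respect to `φ` hold iff
`ψ := φ ∘ η⁻¹` satisfies the Euler–Lagrange equations of `L`. -/
theorem stmt_1 {m N : ℕ}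
    (L : (Fin m → ℝ) × (Fin N → ℝ) × (Fin N → Fin m → ℝ) → ℝ)
    (hL : ContDiff ℝ (⊤ : ℕ∞) L)
    (η η' : (Fin m → ℝ) → (Fin m → ℝ))
    (hη : ContDiff ℝ (⊤ : ℕ∞) η) (hη' : ContDiff ℝ (⊤ : ℕ∞) η')
    (hη1 : Function.LeftInverse η' η) (hη2 : Function.RightInverse η' η)
    (φ : (Fin m → ℝ) → (Fin N → ℝ)) (hφ : ContDiff ℝ (⊤ : ℕ∞) φ) :
    (∀ (A : Fin N) (x : Fin m → ℝ),
        fderiv ℝ (Ltilde L) (covSect η φ x) (0, 0, 0, Pi.single A 1, 0)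
          - ∑ μ : Fin m, fderiv ℝ
              (fun x' => fderiv ℝ (Ltilde L) (covSect η φ x')
                (0, 0, 0, 0, Pi.single A (Pi.single μ 1))) x (Pi.single μ 1) = 0)
      ↔
    (∀ (A : Fin N) (b : Fin m → ℝ),
        fderiv ℝ L (b, (φ ∘ η') b, jet1 (φ ∘ η') b) (0, Pi.single A 1, 0)
          - ∑ c : Fin m, fderiv ℝ
              (fun b' => fderiv ℝ L (b', (φ ∘ η') b', jet1 (φ ∘ η') b')
                (0, 0, Pi.single A (Pi.single c 1))) b (Pi.single c 1) = 0) := by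
  have hdet : ∀ x, (Matrix.of (jacobian η x)).det ≠ 0 := fun x h => by
    simpa [h] using congrArg Matrix.det
      (jacobian_mul_jacobian (hη.differentiable (by simp)) (hη'.differentiable (by simp)) hη1 x)
  have h2 : (2 : WithTop ℕ∞) ≤ ((⊤ : ℕ∞) : WithTop ℕ∞) :=
    WithTop.coe_le_coe.2 le_top
  have key := eulerLagrange_Ltilde (hL.of_le h2) (hη.of_le h2) (hη'.of_le h2) hη1 (hφ.of_le h2)
  refine ⟨fun h A b => ?_, fun h A x => by rw [key, h A (η x), mul_zero]⟩
  have hb := h A (η' b)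
  rw [key, hη2 b] at hb
  exact (mul_eq_zero.1 hb).resolve_left (hdet _)
end
end

section
/- Let L : ℝ^m × ℝ^N × (ℝ^N)^m → ℝ be a smooth first-order Lagrangian, η : ℝ^m → ℝ^m a smooth diffeomorphism, and φ : ℝ^m → ℝ^N smooth. Define the covariantized Lagrangian L̃(x,b,J,y,v) := L(b, y, v·J⁻¹)·det J for b ∈ ℝ^m, J an invertible m×m matrix, y ∈ ℝ^N, v ∈ (ℝ^N)^m, where (v·J⁻¹)^A_c = Σ_μ v^A_μ (J⁻¹)^μ_c, evaluated along the section s(x) = (x, η(x), Dη(x), φ(x), Dφ(x)). If (η,φ) satisfies the Euler–Lagrange equations of L̃ with respect to φ, i.e. (∂L̃/∂y^A)(s(x)) − Σ_μ (d/dx^μ)[(∂L̃/∂v^A_μ)(s(x))] = 0 for all A and x, then the Euler–Lagrange equations of L̃ with respect to the covariance field η are identically satisfied: (∂L̃/∂b^a)(s(x)) − Σ_μ (d/dx^μ)[(∂L̃/∂J^a_μ)(s(x))] = 0 for all a and all x ∈ ℝ^m. -/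
noncomputable section

theorem contDiffAt_matrix_det {E : Type*} [NormedAddCommGroup E] [NormedSpace ℝ E] {k : ℕ}
    {n : WithTop ℕ∞} {M : E → Matrix (Fin k) (Fin k) ℝ} {p : E}
    (hM : ∀ i j, ContDiffAt ℝ n (fun q => M q i j) p) :
    ContDiffAt ℝ n (fun q => (M q).det) p := by
  simp only [Matrix.det_apply']
  exact ContDiffAt.sum fun σ _ => contDiffAt_const.mul (contDiffAt_prod fun i _ => hM _ _)

theorem contDiffAt_matrix_inv {E : Type*} [NormedAddCommGroup E] [NormedSpace ℝ E] {k : ℕ}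
    {n : WithTop ℕ∞} {M : E → Matrix (Fin k) (Fin k) ℝ} {p : E}
    (hM : ∀ i j, ContDiffAt ℝ n (fun q => M q i j) p) (hdet : (M p).det ≠ 0) (i j : Fin k) :
    ContDiffAt ℝ n (fun q => (M q)⁻¹ i j) p := by
  simp only [Matrix.inv_def, Matrix.smul_apply, smul_eq_mul, Ring.inverse_eq_inv',
    Matrix.adjugate_apply]
  refine ((contDiffAt_matrix_det hM).inv hdet).mul (contDiffAt_matrix_det fun a b => ?_)
  by_cases h : a = j
  · subst h
    simpa using contDiffAt_const
  · simpa [Matrix.updateRow_ne h] using hM a b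

theorem contDiffAt_Ltilde {m N : ℕ}
    {L : (Fin m → ℝ) × (Fin N → ℝ) × (Fin N → Fin m → ℝ) → ℝ}
    (hL : ContDiff ℝ (⊤ : ℕ∞) L)
    {p : (Fin m → ℝ) × (Fin m → ℝ) × (Fin m → Fin m → ℝ) × (Fin N → ℝ) × (Fin N → Fin m → ℝ)}
    (hp : (Matrix.of p.2.2.1).det ≠ 0) : ContDiffAt ℝ (⊤ : ℕ∞) (Ltilde L) p := by
  have hJ : ∀ i j, ContDiffAt ℝ (⊤ : ℕ∞)
      (fun q : (Fin m → ℝ) × (Fin m → ℝ) × (Fin m → Fin m → ℝ) × (Fin N → ℝ) ×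
        (Fin N → Fin m → ℝ) => Matrix.of q.2.2.1 i j) p := by
    intro i j
    simp only [Matrix.of_apply]
    fun_prop
  refine ContDiffAt.mul (hL.contDiffAt.comp p (ContDiffAt.prodMk (by fun_prop)
    (ContDiffAt.prodMk (by fun_prop) ?_))) (contDiffAt_matrix_det hJ)
  refine contDiffAt_pi.2 fun A => contDiffAt_pi.2 fun c => ContDiffAt.sum fun μ _ => ?_
  exact ContDiffAt.mul (by fun_prop) (contDiffAt_matrix_inv hJ hp μ c)

/-- Equivariance of `Ltilde L` under linear reparametrizations of the base. -/
theorem Ltilde_mul_right {m N : ℕ}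
    (L : (Fin m → ℝ) × (Fin N → ℝ) × (Fin N → Fin m → ℝ) → ℝ)
    (x b : Fin m → ℝ) (J : Fin m → Fin m → ℝ) (y : Fin N → ℝ) (v : Fin N → Fin m → ℝ)
    (K : Matrix (Fin m) (Fin m) ℝ) (hK : K.det ≠ 0) :
    Ltilde L (x, b, Matrix.of J * K, y, Matrix.of v * K) = K.det * Ltilde L (x, b, J, y, v) := by
  have h : Matrix.of v * K * (Matrix.of J * K)⁻¹ = Matrix.of v * (Matrix.of J)⁻¹ := by
    rw [Matrix.mul_inv_rev, Matrix.mul_assoc,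
      Matrix.mul_nonsing_inv_cancel_left _ _ (isUnit_iff_ne_zero.2 hK)]
  have h' : (fun A c => ∑ μ, (Matrix.of v * K) A μ * (Matrix.of J * K)⁻¹ μ c)
      = fun A c => ∑ μ, v A μ * (Matrix.of J)⁻¹ μ c := by
    ext A c
    simpa [Matrix.mul_apply] using congrFun (congrFun h A) c
  change L (b, y, fun A c => ∑ μ, (Matrix.of v * K) A μ * (Matrix.of J * K)⁻¹ μ c)
    * (Matrix.of J * K).det = K.det * (L (b, y, _) * _)
  rw [h', Matrix.det_mul]
  ring

theorem fderiv_Ltilde_mul_right {m N : ℕ}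
    {L : (Fin m → ℝ) × (Fin N → ℝ) × (Fin N → Fin m → ℝ) → ℝ}
    (x b : Fin m → ℝ) (J : Fin m → Fin m → ℝ) (y : Fin N → ℝ) (v : Fin N → Fin m → ℝ)
    (hd : DifferentiableAt ℝ (Ltilde L) (x, b, J, y, v)) (E : Matrix (Fin m) (Fin m) ℝ) :
    fderiv ℝ (Ltilde L) (x, b, J, y, v) (0, 0, Matrix.of J * E, 0, Matrix.of v * E)
      = E.trace * Ltilde L (x, b, J, y, v) := by
  let w : (Fin m → ℝ) × (Fin m → ℝ) × (Fin m → Fin m → ℝ) × (Fin N → ℝ) × (Fin N → Fin m → ℝ) :=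
    (0, 0, Matrix.of J * E, 0, Matrix.of v * E)
  have hline : HasDerivAt (fun t : ℝ => ((x, b, J, y, v) : (Fin m → ℝ) × (Fin m → ℝ) ×
      (Fin m → Fin m → ℝ) × (Fin N → ℝ) × (Fin N → Fin m → ℝ)) + t • w) w 0 := by
    simpa using ((hasDerivAt_id (0 : ℝ)).smul_const w).const_add (x, b, J, y, v)
  have hdet : HasDerivAt (fun t : ℝ => (1 + t • E).det) E.trace 0 := by
    have he : (fun t : ℝ => (1 + t • E).det) = fun t => 1 + E.trace * t +
        ((Matrix.det (1 + (Polynomial.X : Polynomial ℝ) •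
          E.map Polynomial.C)).divX.divX).eval t * t ^ 2 := by
      ext t
      exact Matrix.det_one_add_smul t E
    rw [he]
    have h1 := (((hasDerivAt_id (0 : ℝ)).const_mul E.trace).const_add 1).add
      (((Matrix.det (1 + (Polynomial.X : Polynomial ℝ) •
          E.map Polynomial.C)).divX.divX.hasDerivAt 0).mul ((hasDerivAt_id (0 : ℝ)).pow 2))
    simpa [Pi.add_def, Pi.mul_def, Pi.pow_def] using h1
  have hleft : HasDerivAt (fun t : ℝ => Ltilde L ((x, b, J, y, v) + t • w))
      (fderiv ℝ (Ltilde L) (x, b, J, y, v) w) 0 := by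
    have h0 : HasFDerivAt (Ltilde L) (fderiv ℝ (Ltilde L) (x, b, J, y, v))
        ((x, b, J, y, v) + (0 : ℝ) • w) := by
      rw [zero_smul, add_zero]
      exact hd.hasFDerivAt
    exact h0.comp_hasDerivAt 0 hline
  have hright := hdet.mul_const (Ltilde L (x, b, J, y, v))
  refine hleft.unique (hright.congr_of_eventuallyEq ?_)
  have hne : ∀ᶠ t : ℝ in nhds 0, (1 + t • E).det ≠ 0 :=
    hdet.continuousAt.eventually_ne (by simp)
  filter_upwards [hne] with t ht
  rw [← Ltilde_mul_right L x b J y v _ ht]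
  congr 1
  have hA : ∀ {k : ℕ} (A : Fin k → Fin m → ℝ),
      Matrix.of A * (1 + t • E) = Matrix.of A + t • (Matrix.of A * E) := fun A => by
    rw [Matrix.mul_add, Matrix.mul_one, Matrix.mul_smul]
  rw [hA, hA]
  refine Prod.ext ?_ (Prod.ext ?_ (Prod.ext rfl (Prod.ext ?_ rfl)))
  · exact (congrArg (x + ·) (smul_zero t)).trans (add_zero x)
  · exact (congrArg (b + ·) (smul_zero t)).trans (add_zero b)
  · exact (congrArg (y + ·) (smul_zero t)).trans (add_zero y)

theorem fderiv_Ltilde_base {m N : ℕ}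
    {L : (Fin m → ℝ) × (Fin N → ℝ) × (Fin N → Fin m → ℝ) → ℝ}
    {p : (Fin m → ℝ) × (Fin m → ℝ) × (Fin m → Fin m → ℝ) × (Fin N → ℝ) × (Fin N → Fin m → ℝ)}
    (hd : DifferentiableAt ℝ (Ltilde L) p) (e : Fin m → ℝ) :
    fderiv ℝ (Ltilde L) p (e, 0, 0, 0, 0) = 0 := by
  rw [← hd.lineDeriv_eq_fderiv]
  simp [lineDeriv, Ltilde]

theorem ContinuousLinearMap.apply_jet_eq_sum {m N : ℕ}
    (T : (Fin m → ℝ) × (Fin m → ℝ) × (Fin m → Fin m → ℝ) × (Fin N → ℝ) × (Fin N → Fin m → ℝ)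
      →L[ℝ] ℝ)
    (e b : Fin m → ℝ) (J : Fin m → Fin m → ℝ) (y : Fin N → ℝ) (v : Fin N → Fin m → ℝ) :
    T (e, b, J, y, v) = T (e, 0, 0, 0, 0) + ∑ a, b a * T (0, Pi.single a 1, 0, 0, 0)
      + ∑ a, ∑ ν, J a ν * T (0, 0, Pi.single a (Pi.single ν 1), 0, 0)
      + ∑ A, y A * T (0, 0, 0, Pi.single A 1, 0)
      + ∑ A, ∑ ν, v A ν * T (0, 0, 0, 0, Pi.single A (Pi.single ν 1)) := by
  have hsum : ∀ {k : ℕ} (c : Fin k → ℝ), c = ∑ a, c a • Pi.single a (1 : ℝ) := fun c => by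
    ext i; simp [Finset.sum_apply, Pi.single_apply]
  have hsum₂ : ∀ {k l : ℕ} (c : Fin k → Fin l → ℝ),
      c = ∑ a, ∑ ν, c a ν • Pi.single a (Pi.single ν (1 : ℝ)) := fun c => by
    ext i j
    simp [Finset.sum_apply, Pi.single_apply, apply_ite, ite_apply]
  have h1 : T (0, b, 0, 0, 0) = ∑ a, b a * T (0, Pi.single a 1, 0, 0, 0) := by
    let S := T.toLinearMap ∘ₗ LinearMap.inr ℝ _ _ ∘ₗ LinearMap.inl ℝ _ _
    change S b = ∑ a, b a * S (Pi.single a 1)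
    conv_lhs => rw [hsum b]
    simp only [map_sum, map_smul, smul_eq_mul]
  have h2 : T (0, 0, J, 0, 0)
      = ∑ a, ∑ ν, J a ν * T (0, 0, Pi.single a (Pi.single ν 1), 0, 0) := by
    let S := T.toLinearMap ∘ₗ LinearMap.inr ℝ _ _ ∘ₗ LinearMap.inr ℝ _ _ ∘ₗ LinearMap.inl ℝ _ _
    change S J = ∑ a, ∑ ν, J a ν * S (Pi.single a (Pi.single ν 1))
    conv_lhs => rw [hsum₂ J]
    simp only [map_sum, map_smul, smul_eq_mul]
  have h3 : T (0, 0, 0, y, 0) = ∑ A, y A * T (0, 0, 0, Pi.single A 1, 0) := by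
    let S := T.toLinearMap ∘ₗ LinearMap.inr ℝ _ _ ∘ₗ LinearMap.inr ℝ _ _ ∘ₗ LinearMap.inr ℝ _ _
      ∘ₗ LinearMap.inl ℝ _ _
    change S y = ∑ a, y a * S (Pi.single a 1)
    conv_lhs => rw [hsum y]
    simp only [map_sum, map_smul, smul_eq_mul]
  have h4 : T (0, 0, 0, 0, v)
      = ∑ A, ∑ ν, v A ν * T (0, 0, 0, 0, Pi.single A (Pi.single ν 1)) := by
    let S := T.toLinearMap ∘ₗ LinearMap.inr ℝ _ _ ∘ₗ LinearMap.inr ℝ _ _ ∘ₗ LinearMap.inr ℝ _ _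
      ∘ₗ LinearMap.inr ℝ _ _
    change S v = ∑ a, ∑ ν, v a ν * S (Pi.single a (Pi.single ν 1))
    conv_lhs => rw [hsum₂ v]
    simp only [map_sum, map_smul, smul_eq_mul]
  rw [← h1, ← h2, ← h3, ← h4]
  simp only [← map_add, Prod.mk_add_mk, add_zero, zero_add]

theorem contDiff_jet1 {m N : ℕ} {φ : (Fin m → ℝ) → (Fin N → ℝ)}
    (hφ : ContDiff ℝ (⊤ : ℕ∞) φ) : ContDiff ℝ (⊤ : ℕ∞) (jet1 φ) := by
  have h : ContDiff ℝ (⊤ : ℕ∞) (fderiv ℝ φ) := hφ.fderiv_right (by simp)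
  refine contDiff_pi.2 fun A => contDiff_pi.2 fun μ => ?_
  exact contDiff_pi.1 (h.clm_apply contDiff_const) A

theorem fderiv_jet1_comm {m N : ℕ} {φ : (Fin m → ℝ) → (Fin N → ℝ)}
    (hφ : ContDiff ℝ (⊤ : ℕ∞) φ) (x : Fin m → ℝ) (A : Fin N) (μ ν : Fin m) :
    fderiv ℝ (jet1 φ) x (Pi.single μ 1) A ν = fderiv ℝ (jet1 φ) x (Pi.single ν 1) A μ := by
  have h : ContDiff ℝ (⊤ : ℕ∞) (fderiv ℝ φ) := hφ.fderiv_right (by simp)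
  have hd : DifferentiableAt ℝ (fderiv ℝ φ) x := h.differentiable (by simp) x
  have key : ∀ α β, fderiv ℝ (jet1 φ) x (Pi.single α 1) A β
      = fderiv ℝ (fderiv ℝ φ) x (Pi.single α 1) (Pi.single β 1) A := by
    intro α β
    have h1 : HasFDerivAt (fun x' => jet1 φ x' A β)
        ((ContinuousLinearMap.proj A ∘L
          ContinuousLinearMap.apply ℝ (Fin N → ℝ) (Pi.single β (1 : ℝ) : Fin m → ℝ)) ∘L
            fderiv ℝ (fderiv ℝ φ) x) x :=
      ((ContinuousLinearMap.proj (R := ℝ) (φ := fun _ : Fin N => ℝ) A ∘L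
        ContinuousLinearMap.apply ℝ (Fin N → ℝ)
          (Pi.single β (1 : ℝ) : Fin m → ℝ)).hasFDerivAt).comp x hd.hasFDerivAt
    have h2 : HasFDerivAt (fun x' => jet1 φ x' A β) _ x :=
      hasFDerivAt_pi'.1 (hasFDerivAt_pi'.1
        ((contDiff_jet1 hφ).differentiable (by simp) x).hasFDerivAt A) β
    exact DFunLike.congr_fun (h2.unique h1) _
  rw [key, key]
  have h2 : ContDiffAt ℝ 2 φ x := (hφ.of_le (WithTop.coe_le_coe.2 (le_top : (2 : ℕ∞) ≤ ⊤))).contDiffAt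
  exact congrFun ((h2.isSymmSndFDerivAt (by simp)).eq _ _) A

theorem det_jacobian_ne_zero {m : ℕ} {η η' : (Fin m → ℝ) → (Fin m → ℝ)}
    (hη : Differentiable ℝ η) (hη' : Differentiable ℝ η') (h : Function.LeftInverse η' η)
    (x : Fin m → ℝ) : (Matrix.of (jacobian η x)).det ≠ 0 := by
  have hJ : ∀ (f : (Fin m → ℝ) → (Fin m → ℝ)) (z : Fin m → ℝ),
      Matrix.of (jacobian f z) = LinearMap.toMatrix' (fderiv ℝ f z : (Fin m → ℝ) →ₗ[ℝ] _) := by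
    intro f z
    ext i j
    simp [jacobian, LinearMap.toMatrix'_apply]
  have hcomp : fderiv ℝ η' (η x) ∘L fderiv ℝ η x = ContinuousLinearMap.id ℝ _ := by
    rw [← fderiv_comp x (hη' _) (hη _), h.comp_eq_id, fderiv_id]
  have hmul : Matrix.of (jacobian η' (η x)) * Matrix.of (jacobian η x) = 1 := by
    rw [hJ, hJ, ← LinearMap.toMatrix'_comp, ← ContinuousLinearMap.toLinearMap_comp, hcomp]
    simp
  exact (Matrix.isUnit_det_of_left_inverse hmul).ne_zero

/-- The momenta of `Ltilde L` contract with the jets to the Lagrangian itself. -/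
theorem momenta_contract {m N : ℕ}
    {L : (Fin m → ℝ) × (Fin N → ℝ) × (Fin N → Fin m → ℝ) → ℝ}
    (x b : Fin m → ℝ) (J : Fin m → Fin m → ℝ) (y : Fin N → ℝ) (v : Fin N → Fin m → ℝ)
    (hd : DifferentiableAt ℝ (Ltilde L) (x, b, J, y, v)) (μ ν : Fin m) :
    ∑ a, J a μ * fderiv ℝ (Ltilde L) (x, b, J, y, v) (0, 0, Pi.single a (Pi.single ν 1), 0, 0)
      + ∑ A, v A μ *
        fderiv ℝ (Ltilde L) (x, b, J, y, v) (0, 0, 0, 0, Pi.single A (Pi.single ν 1))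
      = if μ = ν then Ltilde L (x, b, J, y, v) else 0 := by
  have h := fderiv_Ltilde_mul_right x b J y v hd (Matrix.single μ ν 1)
  have hE : ∀ {k : ℕ} (M : Fin k → Fin m → ℝ), Matrix.of M * Matrix.single μ ν (1 : ℝ)
      = Matrix.of fun i j => if j = ν then M i μ else 0 := by
    intro k M
    ext i j
    simp [Matrix.mul_apply, Matrix.single_apply, ite_and, eq_comm]
  rw [hE, hE] at h
  replace h := (ContinuousLinearMap.apply_jet_eq_sum _ 0 0 (fun i j => if j = ν then J i μ else 0)
    0 (fun i j => if j = ν then v i μ else 0)).symm.trans h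
  simp only [fderiv_Ltilde_base hd, ite_mul, zero_mul, Finset.sum_ite_eq',
    Finset.mem_univ, if_true, Pi.zero_apply, Finset.sum_const_zero, zero_add, add_zero] at h
  rw [h]
  split_ifs with hμν
  · subst hμν
    simp
  · simp [Matrix.trace_single_eq_of_ne _ _ _ hμν]

/-- if `(η,φ)` satisfies the Euler–Lagrange equations of `L̃` with respect to
`φ`, then the Euler–Lagrange equations of `L̃` with respect to the covariance field `η`
are identically satisfied. -/
theorem stmt_2 {m N : ℕ}
    (L : (Fin m → ℝ) × (Fin N → ℝ) × (Fin N → Fin m → ℝ) → ℝ)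
    (hL : ContDiff ℝ (⊤ : ℕ∞) L)
    (η η' : (Fin m → ℝ) → (Fin m → ℝ))
    (hη : ContDiff ℝ (⊤ : ℕ∞) η) (hη' : ContDiff ℝ (⊤ : ℕ∞) η')
    (hη1 : Function.LeftInverse η' η) (hη2 : Function.RightInverse η' η)
    (φ : (Fin m → ℝ) → (Fin N → ℝ)) (hφ : ContDiff ℝ (⊤ : ℕ∞) φ)
    (hEL : ∀ (A : Fin N) (x : Fin m → ℝ),
        fderiv ℝ (Ltilde L) (covSect η φ x) (0, 0, 0, Pi.single A 1, 0)
          - ∑ μ : Fin m, fderiv ℝ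
              (fun x' => fderiv ℝ (Ltilde L) (covSect η φ x')
                (0, 0, 0, 0, Pi.single A (Pi.single μ 1))) x (Pi.single μ 1) = 0) :
    ∀ (a : Fin m) (x : Fin m → ℝ),
        fderiv ℝ (Ltilde L) (covSect η φ x) (0, Pi.single a 1, 0, 0, 0)
          - ∑ μ : Fin m, fderiv ℝ
              (fun x' => fderiv ℝ (Ltilde L) (covSect η φ x')
                (0, 0, Pi.single a (Pi.single μ 1), 0, 0)) x (Pi.single μ 1) = 0 := by
  have hdet := det_jacobian_ne_zero (hη.differentiable (by simp)) (hη'.differentiable (by simp)) hη1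
  have hF : ∀ x, ContDiffAt ℝ (⊤ : ℕ∞) (Ltilde L) (covSect η φ x) :=
    fun x => contDiffAt_Ltilde hL (hdet x)
  have hFd : ∀ x, DifferentiableAt ℝ (Ltilde L) (covSect η φ x) :=
    fun x => (hF x).differentiableAt (by simp)
  have hJ : ContDiff ℝ (⊤ : ℕ∞) (jacobian η) := contDiff_jet1 hη
  have hJd : Differentiable ℝ (jacobian η) := hJ.differentiable (by simp)
  have hV : ContDiff ℝ (⊤ : ℕ∞) (jet1 φ) := contDiff_jet1 hφ
  have hVd : Differentiable ℝ (jet1 φ) := hV.differentiable (by simp)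
  have hs : ContDiff ℝ (⊤ : ℕ∞) (covSect η φ) :=
    contDiff_id.prodMk (hη.prodMk (hJ.prodMk (hφ.prodMk hV)))
  have hs' : ∀ x e, fderiv ℝ (covSect η φ) x e
      = (e, fderiv ℝ η x e, fderiv ℝ (jacobian η) x e, fderiv ℝ φ x e, fderiv ℝ (jet1 φ) x e) := by
    intro x e
    have h := (hasFDerivAt_id (𝕜 := ℝ) x).prodMk
      ((hη.differentiable (by simp) x).hasFDerivAt.prodMk ((hJd x).hasFDerivAt.prodMk
        ((hφ.differentiable (by simp) x).hasFDerivAt.prodMk (hVd x).hasFDerivAt)))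
    exact DFunLike.congr_fun (HasFDerivAt.fderiv (f := covSect η φ) h) e
  have hmom : ∀ w x, DifferentiableAt ℝ
      (fun x' => fderiv ℝ (Ltilde L) (covSect η φ x') w) x := by
    intro w x
    have h1 : DifferentiableAt ℝ (fderiv ℝ (Ltilde L)) (covSect η φ x) :=
      ((hF x).fderiv_right (m := 1) (WithTop.coe_le_coe.2 (le_top : (2 : ℕ∞) ≤ ⊤))).differentiableAt (by simp)
    exact (h1.comp x (hs.differentiable (by simp) x)).clm_apply (differentiableAt_const w)
  have hentry : ∀ {k : ℕ} (f : (Fin m → ℝ) → Fin k → Fin m → ℝ), Differentiable ℝ f →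
      ∀ i μ x, HasFDerivAt (fun x' => f x' i μ)
        ((ContinuousLinearMap.proj μ ∘L ContinuousLinearMap.proj i) ∘L fderiv ℝ f x) x := by
    intro k f hf i μ x
    exact hasFDerivAt_pi'.1 (hasFDerivAt_pi'.1 (hf x).hasFDerivAt i) μ
  set P : Fin m → Fin m → (Fin m → ℝ) → ℝ := fun a ν x' =>
    fderiv ℝ (Ltilde L) (covSect η φ x') (0, 0, Pi.single a (Pi.single ν 1), 0, 0) with hP
  set Q : Fin N → Fin m → (Fin m → ℝ) → ℝ := fun A ν x' =>
    fderiv ℝ (Ltilde L) (covSect η φ x') (0, 0, 0, 0, Pi.single A (Pi.single ν 1)) with hQ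
  have noether : ∀ x μ, ∑ a, (fderiv ℝ (Ltilde L) (covSect η φ x) (0, Pi.single a 1, 0, 0, 0)
      - ∑ ν, fderiv ℝ (P a ν) x (Pi.single ν 1)) * jacobian η x a μ = 0 := by
    intro x μ
    have hcontract : ∀ ν, (fun x' => ∑ a, jacobian η x' a μ * P a ν x'
        + ∑ A, jet1 φ x' A μ * Q A ν x')
        = fun x' => if μ = ν then Ltilde L (covSect η φ x') else 0 :=
      fun ν => funext fun x' => momenta_contract _ _ _ _ _ (hFd x') μ ν
    have hprod : ∀ ν, fderiv ℝ (fun x' => ∑ a, jacobian η x' a μ * P a ν x'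
        + ∑ A, jet1 φ x' A μ * Q A ν x') x (Pi.single ν 1)
        = ∑ a, (jacobian η x a μ * fderiv ℝ (P a ν) x (Pi.single ν 1)
          + P a ν x * fderiv ℝ (jacobian η) x (Pi.single μ 1) a ν)
        + ∑ A, (jet1 φ x A μ * fderiv ℝ (Q A ν) x (Pi.single ν 1)
          + Q A ν x * fderiv ℝ (jet1 φ) x (Pi.single μ 1) A ν) := by
      intro ν
      have h := (HasFDerivAt.fun_sum (u := Finset.univ) fun a _ =>
          (hentry _ hJd a μ x).fun_mul (hmom (0, 0, Pi.single a (Pi.single ν 1), 0, 0)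
            x).hasFDerivAt).fun_add
        (HasFDerivAt.fun_sum (u := Finset.univ) fun A _ =>
          (hentry _ hVd A μ x).fun_mul (hmom (0, 0, 0, 0, Pi.single A (Pi.single ν 1))
            x).hasFDerivAt)
      have hsymm : ∀ a, fderiv ℝ (jacobian η) x (Pi.single μ 1) a ν
          = fderiv ℝ (jacobian η) x (Pi.single ν 1) a μ := fun a => fderiv_jet1_comm hη x a μ ν
      simp only [hsymm, fderiv_jet1_comm hφ x _ μ ν]
      refine (DFunLike.congr_fun h.fderiv _).trans ?_
      simp [hP, hQ]
    have hsum : ∑ ν, fderiv ℝ (fun x' => ∑ a, jacobian η x' a μ * P a ν x'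
        + ∑ A, jet1 φ x' A μ * Q A ν x') x (Pi.single ν 1)
        = fderiv ℝ (fun x' => Ltilde L (covSect η φ x')) x (Pi.single μ 1) := by
      simp only [hcontract]
      rw [Finset.sum_eq_single μ]
      · simp
      · intro ν _ hν
        simp [hν.symm]
      · simp
    have hchain : fderiv ℝ (fun x' => Ltilde L (covSect η φ x')) x (Pi.single μ 1)
        = fderiv ℝ (Ltilde L) (covSect η φ x) (fderiv ℝ (covSect η φ) x (Pi.single μ 1)) :=
      DFunLike.congr_fun (fderiv_comp x (hFd x) (hs.differentiable (by simp) x)) _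
    rw [hchain, hs', ContinuousLinearMap.apply_jet_eq_sum, fderiv_Ltilde_base (hFd x)] at hsum
    have hφ_eq : ∀ A, fderiv ℝ (Ltilde L) (covSect η φ x) (0, 0, 0, Pi.single A 1, 0)
        = ∑ ν, fderiv ℝ (Q A ν) x (Pi.single ν 1) := fun A => sub_eq_zero.1 (hEL A x)
    simp only [hprod, hφ_eq, Finset.sum_add_distrib] at hsum
    rw [Finset.sum_comm, Finset.sum_comm (f := fun ν a => P a ν x * _),
      Finset.sum_comm (f := fun ν A => jet1 φ x A μ * _),
      Finset.sum_comm (f := fun ν A => Q A ν x * _)] at hsum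
    simp only [sub_mul, Finset.sum_sub_distrib, Finset.sum_mul]
    simp only [Finset.mul_sum] at hsum
    simp only [mul_comm (P _ _ x), mul_comm (Q _ _ x)] at hsum
    simp only [mul_comm _ (jacobian η x _ μ)]
    change _ = 0 + ∑ a, jacobian η x a μ * _ + _ + ∑ A, ∑ ν, jet1 φ x A μ * _ + _ at hsum
    linarith
  intro a x
  exact congrFun (Matrix.eq_zero_of_vecMul_eq_zero (hdet x) (funext fun μ => noether x μ)) a
end
end

section
/- Let L : ℝ × ℝ^n × ℝ^n → ℝ, written L(T,q,u), be smooth; let T : ℝ → ℝ be a smooth diffeomorphism with Ṫ(t) ≠ 0 for all t, and q : ℝ → ℝ^n smooth. Define the reparametrized Lagrangian along (T,q) by L̃(t) := L(T(t), q(t), q̇(t)/Ṫ(t))·Ṫ(t). Then the Euler–Lagrange equations of L̃ with respect to q, namely (∂L/∂q^A)(T(t),q(t),q̇(t)/Ṫ(t))·Ṫ(t) − (d/dt)[(∂L/∂u^A)(T(t),q(t),q̇(t)/Ṫ(t))] = 0 for all A and all t ∈ ℝ, hold if and only if r := q∘T⁻¹ satisfies the Euler–Lagrange equations of L: (∂L/∂q^A)(s,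 r(s), r′(s)) − (d/ds)[(∂L/∂u^A)(s, r(s), r′(s))] = 0 for all A and all s ∈ ℝ. -/
noncomputable section

/-- the Euler–Lagrange equations of the reparametrized mechanics Lagrangian
`L̃(t) = L(T(t), q(t), q̇(t)/Ṫ(t))·Ṫ(t)` with respect to `q` hold iff `r := q ∘ T⁻¹`
satisfies the Euler–Lagrange equations of `L`. -/
theorem stmt_7 {n : ℕ}
    (L : ℝ × (Fin n → ℝ) × (Fin n → ℝ) → ℝ) (hL : ContDiff ℝ (⊤ : ℕ∞) L)
    (T Tinv : ℝ → ℝ) (hT : ContDiff ℝ (⊤ : ℕ∞) T) (hTinv : ContDiff ℝ (⊤ : ℕ∞) Tinv)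
    (hT1 : Function.LeftInverse Tinv T) (hT2 : Function.RightInverse Tinv T)
    (hT' : ∀ t : ℝ, deriv T t ≠ 0)
    (q : ℝ → (Fin n → ℝ)) (hq : ContDiff ℝ (⊤ : ℕ∞) q) :
    (∀ (A : Fin n) (t : ℝ),
        fderiv ℝ L (T t, q t, fun B => deriv q t B / deriv T t) (0, Pi.single A 1, 0)
            * deriv T t
          - deriv (fun t' =>
              fderiv ℝ L (T t', q t', fun B => deriv q t' B / deriv T t')
                (0, 0, Pi.single A 1)) t = 0)
      ↔
    (∀ (A : Fin n) (s : ℝ),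
        fderiv ℝ L (s, (q ∘ Tinv) s, deriv (q ∘ Tinv) s) (0, Pi.single A 1, 0)
          - deriv (fun s' =>
              fderiv ℝ L (s', (q ∘ Tinv) s', deriv (q ∘ Tinv) s')
                (0, 0, Pi.single A 1)) s = 0) := by
  have hTdiff : Differentiable ℝ T := hT.differentiable (by simp)
  have hr : ContDiff ℝ (⊤ : ℕ∞) (q ∘ Tinv) := hq.comp hTinv
  have hr' : ContDiff ℝ 1 (deriv (q ∘ Tinv)) :=
    (contDiff_infty_iff_deriv.1 hr).2.of_le (by simp)
  have hvel (t : ℝ) :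
      (fun B => deriv q t B / deriv T t) = deriv (q ∘ Tinv) (T t) := by
    have h := ((hr.differentiable (by simp)) (T t)).hasDerivAt.scomp t (hTdiff t).hasDerivAt
    have hcomp : (q ∘ Tinv) ∘ T = q := funext fun x => congrArg q (hT1 x)
    rw [hcomp] at h
    funext B
    rw [h.deriv, Pi.smul_apply, smul_eq_mul, mul_div_cancel_left₀ _ (hT' t)]
  have hmom (A : Fin n) : Differentiable ℝ (fun s =>
      fderiv ℝ L (s, (q ∘ Tinv) s, deriv (q ∘ Tinv) s) (0, 0, Pi.single A 1)) := by
    have hdL : ContDiff ℝ 1 (fderiv ℝ L) := hL.fderiv_right (by norm_cast)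
    have hcurve : ContDiff ℝ 1 (fun s => (s, (q ∘ Tinv) s, deriv (q ∘ Tinv) s)) :=
      contDiff_id.prodMk ((hr.of_le (by simp)).prodMk hr')
    exact ((hdL.comp hcurve).clm_apply contDiff_const).differentiable (by simp)
  have key (A : Fin n) (t : ℝ) :
      fderiv ℝ L (T t, q t, fun B => deriv q t B / deriv T t) (0, Pi.single A 1, 0)
            * deriv T t
          - deriv (fun t' =>
              fderiv ℝ L (T t', q t', fun B => deriv q t' B / deriv T t')
                (0, 0, Pi.single A 1)) t
        = (fderiv ℝ L (T t, (q ∘ Tinv) (T t), deriv (q ∘ Tinv) (T t)) (0, Pi.single A 1, 0)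
          - deriv (fun s' =>
              fderiv ℝ L (s', (q ∘ Tinv) s', deriv (q ∘ Tinv) s')
                (0, 0, Pi.single A 1)) (T t)) * deriv T t := by
    have hq' (x : ℝ) : (q ∘ Tinv) (T x) = q x := congrArg q (hT1 x)
    have h := ((hmom A (T t)).hasDerivAt.comp t (hTdiff t).hasDerivAt).deriv
    simp only [Function.comp_def] at h hq' hvel ⊢
    simp only [hvel, hq'] at h ⊢
    rw [h, sub_mul]
  constructor
  · intro h A s
    have hs := h A (Tinv s)
    rw [key, hT2 s] at hs
    have hne := hT' (Tinv s)
    exact (mul_eq_zero.1 hs).resolve_right hne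
  · intro h A t
    rw [key, h A (T t), zero_mul]
end
end
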